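/- arXiv:2007.02059 — 2 statements merged into one kernel-verified Lean document; each statement's English description precedes it below -/
import Mathlib

section
/- For every positive integer k, the Gallai-Ramsey number gr_k(K3 : K3) equals 5^{k/2} + 1 if k is even, and 2·5^{(k−1)/2} + 1 if k is odd. -/
/-- A symmetric edge-coloring function on the complete graph on `Fin n`. -/
def IsSym {n : ℕ} {α : Type*} (c : Fin n → Fin n → α) : Prop :=
  ∀ u v : Fin n, c u v = c v u

/-- A Gallai coloring: no triangle whose three edges get three distinct colors. -/
def NoRainbowTriangle {n : ℕ} {α : Type*} (c : Fin n → Fin n → α) : Prop :=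
  ∀ u v w : Fin n, u ≠ v → u ≠ w → v ≠ w →
    c u v = c u w ∨ c u v = c v w ∨ c u w = c v w

/-- There is a monochromatic triangle in color `i`. -/
def HasMonoK3 {n : ℕ} {α : Type*} (c : Fin n → Fin n → α) (i : α) : Prop :=
  ∃ a b d : Fin n, a ≠ b ∧ a ≠ d ∧ b ≠ d ∧
    c a b = i ∧ c a d = i ∧ c b d = i

/-- There is a monochromatic copy of `K₄⁺ = K₁ ∨ (K₃ + K₁)` in color `i`:
a vertex `x` joined to all of `a, b, d, e`, where `a b d` is a triangle
(equivalently `K₄` on `{x,a,b,d}` together with a pendant edge `x e`). -/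
def HasMonoK4plus {n : ℕ} {α : Type*} (c : Fin n → Fin n → α) (i : α) : Prop :=
  ∃ x a b d e : Fin n,
    x ≠ a ∧ x ≠ b ∧ x ≠ d ∧ x ≠ e ∧ a ≠ b ∧ a ≠ d ∧ a ≠ e ∧ b ≠ d ∧ b ≠ e ∧ d ≠ e ∧
    c x a = i ∧ c x b = i ∧ c x d = i ∧ c x e = i ∧
    c a b = i ∧ c a d = i ∧ c b d = i

/-!
Upper bound. Among the partitions into at least two classes such that the edges between any two
classes share one color, take a coarsest one. Contracting its classes gives a coloring with no
proper nontrivial partition of this kind, and since in a Gallai coloring the components of a color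
class form such a partition, every color of the contracted coloring is connected. In a Gallai
coloring three colors cannot all be connected, so at most two colors occur between the classes;
having no monochromatic triangle, there are then at most two or five classes. Every class meets an
edge of each of these colors leaving it, so these colors are unavailable inside the class, and
induction applies.

Lower bound. Substituting copies of the pentagon coloring of `K₅` for the vertices of an extremal
coloring multiplies the order by five at the cost of two new colors.
-/

variable {α β κ ι : Type*}

/-- A Gallai coloring of the complete graph on an arbitrary vertex type; as in `IsSym` and
`NoRainbowTriangle`, an edge coloring is a symmetric function whose diagonal values are
irrelevant. -/
structure IsGallai (c : α → α → κ) : Prop where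
  symm : ∀ x y, c x y = c y x
  not_rainbow : ∀ x y z, x ≠ y → x ≠ z → y ≠ z → c x y = c x z ∨ c x y = c y z ∨ c x z = c y z

/-- An edge coloring of the complete graph on `α` without a monochromatic triangle. -/
def NoMonoTriangle (c : α → α → κ) : Prop :=
  ∀ x y z, x ≠ y → x ≠ z → y ≠ z → c x y = c x z → c x y ≠ c y z

theorem noMonoTriangle_iff_forall_not_hasMonoK3 {n : ℕ} {c : Fin n → Fin n → κ} :
    NoMonoTriangle c ↔ ∀ i, ¬ HasMonoK3 c i where
  mp hm _ := fun ⟨x, y, z, hxy, hxz, hyz, hi, hj, hk⟩ ↦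
    hm x y z hxy hxz hyz (hi.trans hj.symm) (hi.trans hk.symm)
  mpr hno x y z hxy hxz hyz h h' :=
    hno (c x y) ⟨x, y, z, hxy, hxz, hyz, rfl, h.symm, h'.symm⟩

theorem IsGallai.comp {c : α → α → κ} (hc : IsGallai c) {f : β → α} (hf : f.Injective)
    (g : κ → ι) : IsGallai fun x y ↦ g (c (f x) (f y)) where
  symm _ _ := congrArg g (hc.symm _ _)
  not_rainbow _ _ _ hxy hxz hyz :=
    (hc.not_rainbow _ _ _ (hf.ne hxy) (hf.ne hxz) (hf.ne hyz)).imp (congrArg g)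
      (Or.imp (congrArg g) (congrArg g))

theorem NoMonoTriangle.comp {c : α → α → κ} (hm : NoMonoTriangle c) {f : β → α}
    (hf : f.Injective) {g : κ → ι} (hg : g.Injective) :
    NoMonoTriangle fun x y ↦ g (c (f x) (f y)) :=
  fun _ _ _ hxy hxz hyz h ↦
    hg.ne (hm _ _ _ (hf.ne hxy) (hf.ne hxz) (hf.ne hyz) (hg h))

/-- The graph formed by the edges of color `i`. -/
def colorGraph (c : α → α → κ) (i : κ) : SimpleGraph α :=
  .fromRel fun x y ↦ c x y = i

theorem IsGallai.colorGraph_adj {c : α → α → κ} (hc : IsGallai c) {i : κ} {x y : α} :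
    (colorGraph c i).Adj x y ↔ x ≠ y ∧ c x y = i := by
  rw [colorGraph, SimpleGraph.fromRel_adj, hc.symm y x, or_self]

theorem induce_colorGraph (c : α → α → κ) (i : κ) (s : Set α) :
    (colorGraph c i).induce s = colorGraph (fun x y : s ↦ c x y) i := by
  ext x y
  simp only [SimpleGraph.comap_adj, colorGraph, SimpleGraph.fromRel_adj,
    Function.Embedding.subtype_apply, ne_eq, Subtype.ext_iff]

section Homogeneous

/-- A partition, encoded as an equivalence relation, such that all edges between any two distinct
classes have the same color: a Gallai partition without the bound on the number of colors. -/
def IsHomogeneous (c : α → α → κ) (r : Setoid α) : Prop :=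
  ∀ ⦃x x' y y' : α⦄, r x x' → r y y' → ¬ r x y → c x y = c x' y'

/-- A coloring that is prime for substitution: its only homogeneous partitions are the two trivial
ones. -/
def IsPrimeColoring (c : α → α → κ) : Prop :=
  ∀ r, IsHomogeneous c r → r = ⊥ ∨ r = ⊤

/-- The reduced coloring of a partition, read off on representatives of the classes. -/
noncomputable def quotientColoring (c : α → α → κ) (r : Setoid α) : Quotient r → Quotient r → κ :=
  fun a b ↦ c a.out b.out

theorem IsGallai.quotient {c : α → α → κ} (hc : IsGallai c) (r : Setoid α) :
    IsGallai (quotientColoring c r) :=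
  hc.comp Quotient.out_injective id

theorem NoMonoTriangle.quotient {c : α → α → κ} (hm : NoMonoTriangle c) (r : Setoid α) :
    NoMonoTriangle (quotientColoring c r) :=
  hm.comp Quotient.out_injective Function.injective_id

variable {c : α → α → κ} {r : Setoid α}

theorem IsHomogeneous.quotientColoring_mk (hr : IsHomogeneous c r) {x y : α} (hxy : ¬ r x y) :
    quotientColoring c r ⟦x⟧ ⟦y⟧ = c x y :=
  (hr (r.symm' (Quotient.mk_out x)) (r.symm' (Quotient.mk_out y)) hxy).symm

theorem IsHomogeneous.comap_mk (hr : IsHomogeneous c r) {s : Setoid (Quotient r)}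
    (hs : IsHomogeneous (quotientColoring c r) s) :
    IsHomogeneous c (s.comap (Quotient.mk r)) := by
  have not_rel : ∀ {x y : α}, ¬ s ⟦x⟧ ⟦y⟧ → ¬ r x y := fun hs hr ↦
    hs (Quotient.sound hr ▸ s.refl' _)
  intro x x' y y' hx hy hxy
  have hxy' : ¬ s ⟦x'⟧ ⟦y'⟧ := fun h ↦ hxy (s.trans' hx (s.trans' h (s.symm' hy)))
  rw [← hr.quotientColoring_mk (not_rel hxy), ← hr.quotientColoring_mk (not_rel hxy')]
  exact hs hx hy hxy

theorem exists_isHomogeneous_isPrimeColoring [Finite α] [Nontrivial α] (c : α → α → κ) :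
    ∃ r ≠ ⊤, IsHomogeneous c r ∧ IsPrimeColoring (quotientColoring c r) := by
  have : Finite (Setoid α) := Finite.of_injective _ fun _ _ ↦ Setoid.eq_iff_rel_eq.2
  have bot_homogeneous : IsHomogeneous c ⊥ := by
    rintro x _ y _ rfl rfl _
    rfl
  have bot_ne_top : (⊥ : Setoid α) ≠ ⊤ := by
    obtain ⟨x, y, hxy⟩ := exists_pair_ne α
    exact fun h ↦ hxy (Setoid.eq_top_iff.1 h x y)
  obtain ⟨r, -, ⟨r_ne_top, hr⟩, r_max⟩ :=
    Finite.exists_le_maximal (p := fun r ↦ r ≠ ⊤ ∧ IsHomogeneous c r)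
      (a := ⊥) ⟨bot_ne_top, bot_homogeneous⟩
  refine ⟨r, r_ne_top, hr, fun s hs ↦ or_iff_not_imp_right.2 fun s_ne_top ↦ ?_⟩
  have pullback_ne_top : s.comap (Quotient.mk r) ≠ ⊤ := fun h ↦ s_ne_top <|
    Setoid.eq_top_iff.2 <| Quotient.ind₂ fun x y ↦ Setoid.eq_top_iff.1 h x y
  have pullback_le : s.comap (Quotient.mk r) ≤ r :=
    r_max ⟨pullback_ne_top, hr.comap_mk hs⟩ fun {x y} h ↦ by
      rw [Setoid.comap_rel, Quotient.sound h]
  exact eq_bot_iff.2 fun {a b} ↦ Quotient.inductionOn₂ a b fun _ _ h ↦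
    Quotient.sound (pullback_le h)

end Homogeneous

section ConnectedColors

variable {c : α → α → κ}

theorem IsGallai.color_eq_of_adj_of_not_reachable (hc : IsGallai c) {i : κ} {x x' y : α}
    (hadj : (colorGraph c i).Adj x x') (hy : ¬ (colorGraph c i).Reachable x y) :
    c x y = c x' y := by
  have hy' : ¬ (colorGraph c i).Reachable x' y := fun h ↦ hy (hadj.reachable.trans h)
  obtain ⟨hne, hxx'⟩ := hc.colorGraph_adj.1 hadj
  have hxy : x ≠ y := fun h ↦ hy (h ▸ .rfl)
  have hx'y : x' ≠ y := fun h ↦ hy' (h ▸ .rfl)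
  have hcxy : c x y ≠ i := fun h ↦ hy (hc.colorGraph_adj.2 ⟨hxy, h⟩).reachable
  have hcx'y : c x' y ≠ i := fun h ↦ hy' (hc.colorGraph_adj.2 ⟨hx'y, h⟩).reachable
  grind [hc.not_rainbow x x' y hne hxy hx'y]

theorem IsGallai.color_eq_of_reachable_of_not_reachable (hc : IsGallai c) {i : κ} {x x' y : α}
    (hx : (colorGraph c i).Reachable x x') (hy : ¬ (colorGraph c i).Reachable x y) :
    c x y = c x' y := by
  rw [SimpleGraph.reachable_iff_reflTransGen] at hx
  induction hx with
  | refl => rfl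
  | tail hxw hadj ih =>
    rw [← SimpleGraph.reachable_iff_reflTransGen] at hxw
    exact ih.trans (hc.color_eq_of_adj_of_not_reachable hadj fun h ↦ hy (hxw.trans h))

theorem IsGallai.isHomogeneous_reachableSetoid (hc : IsGallai c) (i : κ) :
    IsHomogeneous c (colorGraph c i).reachableSetoid := by
  intro x x' y y' hx hy hxy
  calc c x y = c x' y := hc.color_eq_of_reachable_of_not_reachable hx hxy
    _ = c y x' := hc.symm _ _
    _ = c y' x' := hc.color_eq_of_reachable_of_not_reachable hy fun h ↦ hxy (hx.trans h.symm)
    _ = c x' y' := hc.symm _ _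

theorem IsPrimeColoring.preconnected_colorGraph (hp : IsPrimeColoring c) (hc : IsGallai c) {x y : α}
    (hxy : x ≠ y) : (colorGraph c (c x y)).Preconnected := by
  have hreach : (colorGraph c (c x y)).Reachable x y :=
    (hc.colorGraph_adj.2 ⟨hxy, rfl⟩).reachable
  rcases hp _ (hc.isHomogeneous_reachableSetoid (c x y)) with hbot | htop
  · exact absurd ((Setoid.ext_iff.1 hbot x y).1 hreach) hxy
  · exact Setoid.eq_top_iff.1 htop

theorem exists_adj_reachable_induce_compl_singleton {G : SimpleGraph α} {v : α}
    {u : α} (hu : u ≠ v) (h : G.Reachable u v) :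
    ∃ z : ({v}ᶜ : Set α), G.Adj z v ∧ (G.induce {v}ᶜ).Reachable ⟨u, hu⟩ z := by
  rw [SimpleGraph.reachable_iff_reflTransGen] at h
  induction h using Relation.ReflTransGen.head_induction_on with
  | refl => exact absurd rfl hu
  | @head u w huw _ ih =>
    by_cases hw : w = v
    · exact ⟨⟨u, hu⟩, hw ▸ huw, .rfl⟩
    · obtain ⟨z, hzv, hwz⟩ := ih hw
      have huw' : (G.induce {v}ᶜ).Adj ⟨u, hu⟩ ⟨w, hw⟩ := huw
      exact ⟨z, hzv, huw'.reachable.trans hwz⟩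

theorem IsGallai.color_eq_of_not_reachable_induce (hc : IsGallai c) {p : κ} {v : α}
    (hp : (colorGraph c p).Preconnected) {x w : ({v}ᶜ : Set α)} (hvx : c v x ≠ p)
    (hxw : ¬ ((colorGraph c p).induce {v}ᶜ).Reachable x w) : c x w = c v x := by
  obtain ⟨z, hzv, hwz⟩ := exists_adj_reachable_induce_compl_singleton w.2 (hp w v)
  have hxz : ¬ ((colorGraph c p).induce {v}ᶜ).Reachable x z := fun h ↦ hxw (h.trans hwz.symm)
  have hcxz : c x z ≠ p := fun h ↦
    hxz (SimpleGraph.Adj.reachable <| SimpleGraph.comap_adj.2 <| hc.colorGraph_adj.2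
      ⟨fun h ↦ hxz (Subtype.ext h ▸ .rfl), h⟩)
  have hcxw : c x w = c x z := by
    rw [induce_colorGraph] at hxw hwz
    have hres : IsGallai fun x y : ({v}ᶜ : Set α) ↦ c x y := hc.comp Subtype.val_injective id
    exact hres.isHomogeneous_reachableSetoid p (SimpleGraph.Reachable.refl x) hwz hxw
  obtain ⟨-, hczv⟩ := hc.colorGraph_adj.1 hzv
  have hvz : c v z = p := (hc.symm v z).trans hczv
  grind [hc.not_rainbow v x z (Ne.symm x.2) (Ne.symm z.2) fun h ↦ hxz (Subtype.ext h ▸ .rfl)]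

theorem IsGallai.preconnected_induce_compl_singleton (hc : IsGallai c) {p q r : κ} {v x y : α}
    (hqp : q ≠ p) (hrp : r ≠ p) (hqr : q ≠ r) (hp : (colorGraph c p).Preconnected)
    (hx : (colorGraph c q).Adj v x) (hy : (colorGraph c r).Adj v y) :
    ((colorGraph c p).induce {v}ᶜ).Preconnected := by
  obtain ⟨hvx, hcx⟩ := hc.colorGraph_adj.1 hx
  obtain ⟨hvy, hcy⟩ := hc.colorGraph_adj.1 hy
  lift x to ({v}ᶜ : Set α) using hvx.symm
  lift y to ({v}ᶜ : Set α) using hvy.symm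
  set H := (colorGraph c p).induce {v}ᶜ with hH
  have edge_x : ∀ w, ¬ H.Reachable x w → c x w = q := fun w hw ↦
    (hc.color_eq_of_not_reachable_induce hp (hcx.trans_ne hqp) hw).trans hcx
  have edge_y : ∀ w, ¬ H.Reachable y w → c y w = r := fun w hw ↦
    (hc.color_eq_of_not_reachable_induce hp (hcy.trans_ne hrp) hw).trans hcy
  have hxy : H.Reachable x y := by
    by_contra hxy
    refine hqr ((edge_x y hxy).symm.trans ((hc.symm _ _).trans (edge_y x fun h ↦ hxy h.symm)))
  have reach_x : ∀ w, H.Reachable x w := by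
    intro w
    by_contra hxw
    have hres : IsGallai fun x y : ({v}ᶜ : Set α) ↦ c x y := hc.comp Subtype.val_injective id
    have hcw : c x w = c y w := by
      rw [hH, induce_colorGraph] at hxy hxw
      exact hres.color_eq_of_reachable_of_not_reachable hxy hxw
    exact hqr ((edge_x w hxw).symm.trans (hcw.trans (edge_y w fun h ↦ hxw (hxy.trans h))))
  exact fun a b ↦ (reach_x a).symm.trans (reach_x b)

theorem IsGallai.not_three_preconnected [Finite α] [Nontrivial α] (hc : IsGallai c) {p q r : κ}
    (hpq : p ≠ q) (hpr : p ≠ r) (hqr : q ≠ r) (hp : (colorGraph c p).Preconnected)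
    (hq : (colorGraph c q).Preconnected) (hr : (colorGraph c r).Preconnected) : False := by
  induction hn : Nat.card α using Nat.strong_induction_on generalizing α with
  | _ n ih =>
    obtain ⟨v⟩ : Nonempty α := inferInstance
    obtain ⟨x, hx⟩ := hp.exists_adj_of_nontrivial v
    obtain ⟨y, hy⟩ := hq.exists_adj_of_nontrivial v
    obtain ⟨z, hz⟩ := hr.exists_adj_of_nontrivial v
    have hp' := hc.preconnected_induce_compl_singleton hpq.symm hpr.symm hqr hp hy hz
    have hq' := hc.preconnected_induce_compl_singleton hpq hqr.symm hpr hq hx hz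
    have hr' := hc.preconnected_induce_compl_singleton hpr hqr hpq hr hx hy
    rw [induce_colorGraph] at hp' hq' hr'
    have hxy : x ≠ y := fun h ↦ hpq <|
      (hc.colorGraph_adj.1 hx).2.symm.trans (h ▸ (hc.colorGraph_adj.1 hy).2)
    have : Nontrivial ({v}ᶜ : Set α) := ⟨⟨x, hx.ne'⟩, ⟨y, hy.ne'⟩, fun h ↦ hxy (congrArg (·.1) h)⟩
    have hcard : Nat.card ({v}ᶜ : Set α) < n := hn ▸ Finite.card_subtype_lt (x := v) (by simp)
    exact ih _ hcard (hc.comp Subtype.val_injective id) hp' hq' hr' rfl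

theorem IsPrimeColoring.card_colors_le_two [Finite α] (hp : IsPrimeColoring c)
    (hc : IsGallai c) {U : Finset κ} (hU : ∀ i ∈ U, ∃ x y, x ≠ y ∧ c x y = i) : U.card ≤ 2 := by
  by_contra! hcard
  have connected : ∀ i ∈ U, (colorGraph c i).Preconnected := by
    intro i hi
    obtain ⟨x, y, hxy, rfl⟩ := hU i hi
    exact hp.preconnected_colorGraph hc hxy
  obtain ⟨i, hi, j, hj, k, hk, hij, hik, hjk⟩ := Finset.two_lt_card.1 hcard
  obtain ⟨x, y, hxy, -⟩ := hU i hi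
  have : Nontrivial α := ⟨x, y, hxy⟩
  exact hc.not_three_preconnected hij hik hjk (connected i hi) (connected j hj) (connected k hk)

end ConnectedColors

section Bounds

theorem card_le_card_mul_of_forall_card_fiber_le [Finite α] [Finite β] (f : α → β) {b : ℕ}
    (hb : ∀ y, Nat.card {x // f x = y} ≤ b) : Nat.card α ≤ Nat.card β * b := by
  have := Fintype.ofFinite β
  calc Nat.card α = ∑ y, Nat.card {x // f x = y} := by
        rw [← Nat.card_sigma, Nat.card_congr (Equiv.sigmaFiberEquiv f)]
    _ ≤ ∑ _y : β, b := Finset.sum_le_sum fun y _ ↦ hb y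
    _ = Nat.card β * b := by simp

/-- The Greenwood–Gleason upper bound for the order of an edge coloring with `k` colors and no
monochromatic triangle. -/
def greenwoodGleasonBound : ℕ → ℕ
  | 0 => 1
  | k + 1 => 1 + (k + 1) * greenwoodGleasonBound k

theorem NoMonoTriangle.card_le_greenwoodGleasonBound [Finite α] {c : α → α → κ}
    (hm : NoMonoTriangle c) {S : Finset κ} (hS : ∀ x y, x ≠ y → c x y ∈ S) :
    Nat.card α ≤ greenwoodGleasonBound S.card := by
  classical
  induction hk : S.card generalizing α S with
  | zero =>
    have : Subsingleton α := ⟨fun x y ↦ by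
      by_contra hxy
      simpa [Finset.card_eq_zero.1 hk] using hS x y hxy⟩
    exact Finite.card_le_one_iff_subsingleton.2 this
  | succ k ih =>
    rcases isEmpty_or_nonempty α with _ | ⟨⟨v⟩⟩
    · simp
    let color : {x // x ≠ v} → S := fun x ↦ ⟨c v x, hS v x x.2.symm⟩
    have neighbors_le : ∀ i, Nat.card {x // color x = i} ≤ greenwoodGleasonBound k := by
      intro i
      have val_injective : Function.Injective fun x : {x // color x = i} ↦ (x : α) :=
        Subtype.val_injective.comp Subtype.val_injective
      refine ih (hm.comp val_injective Function.injective_id) (S := S.erase i) ?_ ?_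
      · intro x y hxy
        have hx : c v x = i := congrArg Subtype.val x.2
        have hy : c v y = i := congrArg Subtype.val y.2
        have hne := hm v x y x.1.2.symm y.1.2.symm (val_injective.ne hxy) (hx.trans hy.symm)
        exact Finset.mem_erase.2 ⟨(hx.symm.trans_ne hne).symm, hS _ _ (val_injective.ne hxy)⟩
      · rw [Finset.card_erase_of_mem i.2, hk, Nat.add_sub_cancel]
    have hrest := card_le_card_mul_of_forall_card_fiber_le color neighbors_le
    have hsplit : Nat.card α = 1 + Nat.card {x // x ≠ v} := by
      have := Fintype.ofFinite α
      have := Fintype.card_pos_iff.2 ⟨v⟩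
      simp only [Nat.card_eq_fintype_card, Fintype.card_subtype_compl, Fintype.card_subtype_eq]
      omega
    rw [Nat.card_eq_fintype_card (α := S), Fintype.card_coe, hk] at hrest
    rw [hsplit, greenwoodGleasonBound]
    gcongr

/-- The largest order of a Gallai coloring with `k` colors and no monochromatic triangle. -/
def extremalOrder : ℕ → ℕ
  | 0 => 1
  | 1 => 2
  | k + 2 => 5 * extremalOrder k

theorem extremalOrder_eq_ite (k : ℕ) :
    extremalOrder k = if Even k then 5 ^ (k / 2) else 2 * 5 ^ ((k - 1) / 2) := by
  induction k using Nat.twoStepInduction with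
  | zero => rfl
  | one => rfl
  | more k ih _ =>
    rcases Nat.even_or_odd' k with ⟨m, rfl | rfl⟩
    · simp [extremalOrder, ih, parity_simps, pow_succ']
    · simp [extremalOrder, ih, parity_simps, pow_succ', mul_left_comm]

theorem extremalOrder_pos (k : ℕ) : 0 < extremalOrder k := by
  induction k using Nat.twoStepInduction with
  | zero => decide
  | one => decide
  | more k ih _ => exact Nat.mul_pos (by decide) ih

theorem two_mul_extremalOrder_le (k : ℕ) : 2 * extremalOrder k ≤ extremalOrder (k + 1) := by
  induction k using Nat.twoStepInduction with
  | zero => decide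
  | one => decide
  | more k ih _ =>
    simp only [extremalOrder] at ih ⊢
    omega

theorem extremalOrder_mul_le (k l : ℕ) :
    extremalOrder k * extremalOrder l ≤ extremalOrder (k + l) := by
  induction k using Nat.twoStepInduction with
  | zero => simp [extremalOrder]
  | one => simpa [extremalOrder, add_comm] using two_mul_extremalOrder_le l
  | more k ih _ =>
    calc extremalOrder (k + 2) * extremalOrder l
        = 5 * (extremalOrder k * extremalOrder l) := by rw [extremalOrder, mul_assoc]
      _ ≤ 5 * extremalOrder (k + l) := by gcongr
      _ = extremalOrder (k + 2 + l) := by rw [add_right_comm, extremalOrder]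

theorem greenwoodGleasonBound_eq_extremalOrder {k : ℕ} (hk : k ≤ 2) :
    greenwoodGleasonBound k = extremalOrder k := by
  interval_cases k <;> rfl

variable {c : α → α → κ}

theorem IsHomogeneous.color_ne (hm : NoMonoTriangle c) {r : Setoid α} (hr : IsHomogeneous c r)
    {x x' y : α} (hne : x ≠ x') (hxx' : r x x') (hxy : ¬ r x y) : c x x' ≠ c x y := by
  have hx'y : ¬ r x' y := fun h ↦ hxy (r.trans' hxx' h)
  intro h
  exact hm x x' y hne (fun h ↦ hxy (h ▸ r.refl' _)) (fun h ↦ hx'y (h ▸ r.refl' _)) h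
    (h.trans (hr hxx' (r.refl' y) hxy))

theorem IsHomogeneous.color_ne_quotientColoring (hc : IsGallai c) (hm : NoMonoTriangle c)
    {r : Setoid α} (hr : IsHomogeneous c r) (hp : IsPrimeColoring (quotientColoring c r))
    {x x' : α} (hne : x ≠ x') (hxx' : r x x') {a b : Quotient r} (hab : a ≠ b) :
    c x x' ≠ quotientColoring c r a b := by
  have hc' := hc.quotient r
  have : Nontrivial (Quotient r) := ⟨a, b, hab⟩
  obtain ⟨⟨y⟩, hadj⟩ := (hp.preconnected_colorGraph hc' hab).exists_adj_of_nontrivial ⟦x⟧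
  obtain ⟨hxy, hcolor⟩ := hc'.colorGraph_adj.1 hadj
  have hxy : ¬ r x y := fun h ↦ hxy (Quotient.sound h)
  rw [← hcolor]
  exact (hr.color_ne hm hne hxx' hxy).trans_eq (hr.quotientColoring_mk hxy).symm

theorem IsGallai.card_le_extremalOrder [Finite α] (hc : IsGallai c) (hm : NoMonoTriangle c)
    {S : Finset κ} (hS : ∀ x y, x ≠ y → c x y ∈ S) : Nat.card α ≤ extremalOrder S.card := by
  classical
  induction S using Finset.strongInduction generalizing α with
  | H S ih =>
    rcases subsingleton_or_nontrivial α with hα | hα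
    · exact (Finite.card_le_one_iff_subsingleton.2 hα).trans (extremalOrder_pos _)
    obtain ⟨r, r_ne_top, hr, hp⟩ := exists_isHomogeneous_isPrimeColoring c
    let d := quotientColoring c r
    let U := {i ∈ S | ∃ a b, a ≠ b ∧ d a b = i}
    have hdU : ∀ a b, a ≠ b → d a b ∈ U := fun a b hab ↦
      Finset.mem_filter.2 ⟨hS _ _ (Quotient.out_injective.ne hab), a, b, hab, rfl⟩
    have classes_le : Nat.card (Quotient r) ≤ extremalOrder U.card := by
      have hU : U.card ≤ 2 :=
        hp.card_colors_le_two (hc.quotient r) fun i hi ↦ (Finset.mem_filter.1 hi).2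
      rw [← greenwoodGleasonBound_eq_extremalOrder hU]
      exact (hm.quotient r).card_le_greenwoodGleasonBound hdU
    have U_nonempty : U.Nonempty := by
      simp only [ne_eq, Setoid.eq_top_iff, not_forall] at r_ne_top
      obtain ⟨x, y, hxy⟩ := r_ne_top
      exact ⟨_, hdU ⟦x⟧ ⟦y⟧ fun h ↦ hxy (Quotient.exact h)⟩
    have class_le : ∀ a, Nat.card {x // (⟦x⟧ : Quotient r) = a} ≤ extremalOrder (S \ U).card := by
      intro a
      refine ih _ (Finset.sdiff_ssubset (Finset.filter_subset _ _) U_nonempty)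
        (hc.comp Subtype.val_injective id)
        (hm.comp Subtype.val_injective Function.injective_id) fun x y hxy ↦ ?_
      have hne : (x : α) ≠ y := Subtype.val_injective.ne hxy
      refine Finset.mem_sdiff.2 ⟨hS x y hne, fun hU ↦ ?_⟩
      obtain ⟨-, a, b, hab, h⟩ := Finset.mem_filter.1 hU
      exact hr.color_ne_quotientColoring hc hm hp hne (Quotient.exact (x.2.trans y.2.symm)) hab
        h.symm
    calc Nat.card α ≤ Nat.card (Quotient r) * extremalOrder (S \ U).card :=
          card_le_card_mul_of_forall_card_fiber_le _ class_le
      _ ≤ extremalOrder U.card * extremalOrder (S \ U).card := by gcongr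
      _ ≤ extremalOrder (U.card + (S \ U).card) := extremalOrder_mul_le _ _
      _ = extremalOrder S.card := by
          rw [add_comm, Finset.card_sdiff_add_card_eq_card (Finset.filter_subset _ _)]

end Bounds

section Construction

/-- Substitution of a copy of the coloring `d` for every vertex of the coloring `c`, with disjoint
sets of colors. -/
def lexColoring [DecidableEq α] (c : α → α → κ) (d : β → β → ι) : α × β → α × β → κ ⊕ ι :=
  fun u v ↦ if u.1 = v.1 then .inr (d u.2 v.2) else .inl (c u.1 v.1)

variable [DecidableEq α] {c : α → α → κ} {d : β → β → ι}

theorem IsGallai.lex (hc : IsGallai c) (hd : IsGallai d) :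
    IsGallai (lexColoring c d) where
  symm u v := by
    simp only [lexColoring, eq_comm (a := u.1), hc.symm u.1, hd.symm u.2]
  not_rainbow := by
    rintro ⟨a, x⟩ ⟨a', y⟩ ⟨b, z⟩ hxy hxz hyz
    -- If exactly two of the three vertices share a copy of `d`, their edges to the third agree.
    simp only [ne_eq, Prod.mk.injEq] at hxy hxz hyz
    by_cases a = a' <;> by_cases a = b <;> by_cases a' = b <;>
      grind [lexColoring, hc.not_rainbow a a' b, hd.not_rainbow x y z, hc.symm a a']

theorem NoMonoTriangle.lex (hc : NoMonoTriangle c) (hd : NoMonoTriangle d) :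
    NoMonoTriangle (lexColoring c d) := by
  rintro ⟨a, x⟩ ⟨b, y⟩ ⟨a', z⟩
  have := hc a b a'
  have := hd x y z
  grind [lexColoring, Prod.mk.injEq]

/-- The coloring of `K₅` whose two color classes are a pentagon and its complement. -/
def pentagonColoring (x y : Fin 5) : Fin 2 :=
  if y = x + 1 ∨ x = y + 1 then 0 else 1

theorem isGallai_pentagonColoring : IsGallai pentagonColoring where
  symm := by decide
  not_rainbow := by decide

theorem noMonoTriangle_pentagonColoring : NoMonoTriangle pentagonColoring := by
  unfold NoMonoTriangle
  decide

theorem exists_isGallai_noMonoTriangle (k : ℕ) :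
    ∃ c : Fin (extremalOrder (k + 1)) → Fin (extremalOrder (k + 1)) → Fin (k + 1),
      IsGallai c ∧ NoMonoTriangle c := by
  induction k using Nat.twoStepInduction with
  | zero =>
    have two_vertices : NoMonoTriangle fun _ _ : Fin 2 ↦ (0 : Fin 1) := by
      unfold NoMonoTriangle
      decide
    exact ⟨_, ⟨fun _ _ ↦ rfl, fun _ _ _ _ _ _ ↦ .inl rfl⟩, two_vertices⟩
  | one => exact ⟨pentagonColoring, isGallai_pentagonColoring, noMonoTriangle_pentagonColoring⟩
  | more k ih _ =>
    obtain ⟨c, hc, hm⟩ := ih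
    have vertices : Fin (extremalOrder (k + 3)) ≃ Fin (extremalOrder (k + 1)) × Fin 5 :=
      (finCongr (Nat.mul_comm 5 _)).trans finProdFinEquiv.symm
    have colors : Fin (k + 1) ⊕ Fin 2 ≃ Fin (k + 3) := finSumFinEquiv
    exact ⟨_, (hc.lex isGallai_pentagonColoring).comp vertices.injective colors,
      (hm.lex noMonoTriangle_pentagonColoring).comp vertices.injective colors.injective⟩

end Construction

theorem gallai_ramsey_K3 (k : ℕ) (hk : 1 ≤ k) :
    IsLeast {n : ℕ |
        ∀ c : Fin n → Fin n → ℕ, IsSym c →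
          (∀ u v : Fin n, u ≠ v → c u v ∈ Finset.Icc 1 k) →
          NoRainbowTriangle c →
          ∃ i ∈ Finset.Icc 1 k, HasMonoK3 c i}
      (if Even k then 5 ^ (k / 2) + 1 else 2 * 5 ^ ((k - 1) / 2) + 1) := by
  have closed_form : (if Even k then 5 ^ (k / 2) + 1 else 2 * 5 ^ ((k - 1) / 2) + 1) =
      extremalOrder k + 1 := by
    rw [extremalOrder_eq_ite]
    split_ifs <;> rfl
  rw [closed_form]
  constructor
  · intro c hsymm hcolors hrainbow
    by_contra! hno
    have hm : NoMonoTriangle c := noMonoTriangle_iff_forall_not_hasMonoK3.2 fun i hi ↦ by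
      obtain ⟨x, y, -, hxy, -, -, rfl, -⟩ := id hi
      exact hno _ (hcolors x y hxy) hi
    have hcard := IsGallai.card_le_extremalOrder ⟨hsymm, hrainbow⟩ hm hcolors
    simp at hcard
  · intro n hn
    by_contra! hlt
    obtain ⟨k, rfl⟩ := Nat.exists_eq_add_of_le' hk
    obtain ⟨c, hc, hm⟩ := exists_isGallai_noMonoTriangle k
    have emb := Fin.castLE_injective (Nat.le_of_lt_succ hlt)
    have hc' := hc.comp emb fun i ↦ (i : ℕ) + 1
    have hm' := hm.comp emb ((add_left_injective 1).comp Fin.val_injective)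
    obtain ⟨i, -, hi⟩ :=
      hn _ hc'.symm (fun x y _ ↦ Finset.mem_Icc.2 ⟨by simp, by omega⟩) hc'.not_rainbow
    exact noMonoTriangle_iff_forall_not_hasMonoK3.1 hm' i hi
end

section
/- For all integers k ≥ 2 and 1 ≤ s ≤ k, one has 16·f(k−1, s−1) ≤ 5·f(k, s). -/
/-- The function `f(k,s)` from the paper (for `1 ≤ k` and `s ≤ k`). -/
def f (k s : ℕ) : ℕ :=
  if Even s ∧ Even (k - s) then 17 ^ (s / 2) * 5 ^ ((k - s) / 2)
  else if Even s then 2 * 17 ^ (s / 2) * 5 ^ ((k - s - 1) / 2)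
  else if s = k then 4 * 17 ^ ((k - 1) / 2)
  else if Odd (k - s) then 8 * 17 ^ ((s - 1) / 2) * 5 ^ ((k - s - 1) / 2)
  else 16 * 17 ^ ((s - 1) / 2) * 5 ^ ((k - s - 2) / 2)

/-!
By parity, `f (s + d) s` is a constant times `17 ^ (s / 2) * 5 ^ (d / 2)`, or, for odd `s` and even
`d > 0`, times `17 ^ (s / 2) * 5 ^ (d / 2 - 1)`. Passing from `(k - 1, s - 1)` to `(k, s)` keeps the
difference `d = k - s`, so after dividing by the common powers each parity case compares two
numerals. Equality holds exactly when `s` is odd and `d > 0` is even.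
-/

theorem f_two_mul_add_two_mul (a b : ℕ) : f (2 * a + 2 * b) (2 * a) = 17 ^ a * 5 ^ b := by
  simp [f]

theorem f_two_mul_add_two_mul_add_one (a b : ℕ) :
    f (2 * a + (2 * b + 1)) (2 * a) = 2 * (17 ^ a * 5 ^ b) := by
  simp [f, mul_assoc]

theorem f_two_mul_add_one_self (a : ℕ) : f (2 * a + 1) (2 * a + 1) = 4 * 17 ^ a := by
  simp [f]

theorem f_two_mul_add_one_add_two_mul_add_one (a b : ℕ) :
    f (2 * a + 1 + (2 * b + 1)) (2 * a + 1) = 8 * (17 ^ a * 5 ^ b) := by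
  simp [f, mul_assoc]

theorem f_two_mul_add_one_add_two_mul_succ (a b : ℕ) :
    f (2 * a + 1 + 2 * (b + 1)) (2 * a + 1) = 16 * (17 ^ a * 5 ^ b) := by
  have half_pred : (2 * (b + 1) - 2) / 2 = b := by omega
  simp [f, half_pred, mul_assoc]

theorem sixteen_mul_f_le_five_mul_f_succ_of_even {s : ℕ} (hs : Even s) (d : ℕ) :
    16 * f (s + d) s ≤ 5 * f (s + 1 + d) (s + 1) := by
  obtain ⟨a, rfl⟩ := hs.two_dvd
  obtain ⟨b, rfl | rfl⟩ := d.even_or_odd'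
  · obtain _ | b := b
    · calc
        16 * f (2 * a + 2 * 0) (2 * a) = 16 * 17 ^ a := by rw [f_two_mul_add_two_mul]; ring
        _ ≤ 20 * 17 ^ a := by gcongr; norm_num
        _ = 5 * f (2 * a + 1) (2 * a + 1) := by rw [f_two_mul_add_one_self]; ring
    · apply le_of_eq
      rw [f_two_mul_add_two_mul, f_two_mul_add_one_add_two_mul_succ]
      ring
  · calc
      16 * f (2 * a + (2 * b + 1)) (2 * a) = 32 * (17 ^ a * 5 ^ b) := by
        rw [f_two_mul_add_two_mul_add_one]; ring
      _ ≤ 40 * (17 ^ a * 5 ^ b) := by gcongr; norm_num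
      _ = 5 * f (2 * a + 1 + (2 * b + 1)) (2 * a + 1) := by
        rw [f_two_mul_add_one_add_two_mul_add_one]; ring

theorem sixteen_mul_f_le_five_mul_f_succ_of_odd {s : ℕ} (hs : Odd s) (d : ℕ) :
    16 * f (s + d) s ≤ 5 * f (s + 1 + d) (s + 1) := by
  obtain ⟨a, rfl⟩ := hs
  obtain ⟨b, rfl | rfl⟩ := d.even_or_odd'
  · obtain _ | b := b
    · calc
        16 * f (2 * a + 1) (2 * a + 1) = 64 * 17 ^ a := by rw [f_two_mul_add_one_self]; ring
        _ ≤ 85 * 17 ^ a := by gcongr; norm_num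
        _ = 5 * f (2 * (a + 1) + 2 * 0) (2 * (a + 1)) := by rw [f_two_mul_add_two_mul]; ring
    · calc
        16 * f (2 * a + 1 + 2 * (b + 1)) (2 * a + 1) = 256 * (17 ^ a * 5 ^ b) := by
          rw [f_two_mul_add_one_add_two_mul_succ]; ring
        _ ≤ 425 * (17 ^ a * 5 ^ b) := by gcongr; norm_num
        _ = 5 * f (2 * (a + 1) + 2 * (b + 1)) (2 * (a + 1)) := by
          rw [f_two_mul_add_two_mul]; ring
  · calc
      16 * f (2 * a + 1 + (2 * b + 1)) (2 * a + 1) = 128 * (17 ^ a * 5 ^ b) := by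
        rw [f_two_mul_add_one_add_two_mul_add_one]; ring
      _ ≤ 170 * (17 ^ a * 5 ^ b) := by gcongr; norm_num
      _ = 5 * f (2 * (a + 1) + (2 * b + 1)) (2 * (a + 1)) := by
        rw [f_two_mul_add_two_mul_add_one]; ring

theorem f_ineq_three (k s : ℕ) (hk : 2 ≤ k) (hs1 : 1 ≤ s) (hs2 : s ≤ k) :
    16 * f (k - 1) (s - 1) ≤ 5 * f k s := by
  obtain ⟨d, rfl⟩ := Nat.exists_eq_add_of_le hs2
  obtain ⟨s, rfl⟩ := Nat.exists_eq_add_of_le' hs1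
  have k_pred : s + 1 + d - 1 = s + d := by omega
  rw [k_pred, Nat.add_sub_cancel]
  obtain hs | hs := s.even_or_odd
  · exact sixteen_mul_f_le_five_mul_f_succ_of_even hs d
  · exact sixteen_mul_f_le_five_mul_f_succ_of_odd hs d
end
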